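/- Let F_q be a finite field with q elements and let S be a set of at most eight points of P²(F_q) such that no three points of S are collinear. Then there exists a projective line in P²(F_q) disjoint from S, i.e., a nonzero homogeneous linear form L ∈ F_q[x,y,z] with L(P) ≠ 0 for every P ∈ S. -/

import Mathlib

/-!
Lines of `ℙ²(k)` are counted through their coefficient vectors `a : Fin 3 → k`, with `a = 0` kept
in the sums. Let `q = #k` and let `m a` be the number of points `P i` with `P i ⬝ᵥ a = 0`. One
vanishing condition cuts out `q ^ 2` vectors and two independent ones cut out `q`
(`card_orthogonal`), so `∑ m = n q ^ 2` and `∑ m ^ 2 = n q ^ 2 + n (n - 1) q`.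

If every line met the set, then `m a ∈ {1, 2}` for all `a ≠ 0`, and `∑ (m - 1) (m - 2)` would
reduce to its term `(n - 1) (n - 2)` at `a = 0`. Comparing with the moments and dividing by `q - 1`
gives `d (d - 1) + q (q - 1) = 0` with `d = n - 1 - q`, which is impossible because `q > 1` and
`d` is an integer.
-/

open Finset in
/-- The vectors orthogonal to `r` linearly independent vectors of `k³` number `q ^ (3 - r)`. -/
lemma card_orthogonal {k : Type*} [Field k] [Fintype k] [DecidableEq k] {r : ℕ}
    (v : Fin r → Fin 3 → k) (hv : LinearIndependent k v) :
    #{a : Fin 3 → k | ∀ s, v s ⬝ᵥ a = 0} = Fintype.card k ^ (3 - r) := by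
  classical
  have hrank : (Matrix.of v).rank = r := by
    simpa using LinearIndependent.rank_matrix (M := Matrix.of v) hv
  have hker := (Matrix.of v).mulVecLin.finrank_range_add_finrank_ker
  rw [← Matrix.rank, hrank, Module.finrank_fin_fun] at hker
  have hcard := Module.card_eq_pow_finrank (K := k) (V := LinearMap.ker (Matrix.of v).mulVecLin)
  rw [show Module.finrank k (LinearMap.ker (Matrix.of v).mulVecLin) = 3 - r by omega] at hcard
  rw [← hcard, ← Fintype.card_subtype]
  refine Fintype.card_congr (Equiv.subtypeEquivRight fun a => ?_)
  rw [LinearMap.mem_ker, Matrix.mulVecLin_apply, funext_iff]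
  rfl

/-- The linear form with coefficient vector `a`. -/
noncomputable def linForm {k : Type*} [Field k] (a : Fin 3 → k) : MvPolynomial (Fin 3) k :=
  ∑ t, MvPolynomial.C (a t) * MvPolynomial.X t

lemma eval_linForm {k : Type*} [Field k] (a p : Fin 3 → k) :
    MvPolynomial.eval p (linForm a) = p ⬝ᵥ a := by
  simp [linForm, dotProduct, mul_comm]

lemma linForm_isHomogeneous {k : Type*} [Field k] (a : Fin 3 → k) :
    (linForm a).IsHomogeneous 1 :=
  MvPolynomial.IsHomogeneous.sum _ _ _ fun t _ => MvPolynomial.isHomogeneous_C_mul_X _ t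

lemma linForm_ne_zero {k : Type*} [Field k] {a : Fin 3 → k} (ha : a ≠ 0) : linForm a ≠ 0 := by
  obtain ⟨t, ht⟩ := Function.ne_iff.mp ha
  intro h
  have := eval_linForm a (Pi.single t 1)
  rw [h] at this
  exact ht (by simpa using this.symm)


/-- Let `k = 𝔽_q` be a finite field and let `S` consist of at most eight
points of `ℙ²(k)` (given by nonzero, pairwise non-proportional coordinate vectors) such that
no three of them are collinear (no nonzero homogeneous linear form vanishes at three of them).
Then there is a projective line disjoint from `S`: a nonzero homogeneous linear form `L` with
`L(P) ≠ 0` for every point `P` of `S`. -/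
theorem stmt_4 {k : Type*} [Field k] [Fintype k] (n : ℕ) (hn : n ≤ 8)
    (P : Fin n → Fin 3 → k)
    (hP : ∀ i, P i ≠ 0)
    (hdist : ∀ i j : Fin n, i ≠ j → ¬ ∃ c : k, P j = c • P i)
    (hcol : ¬ ∃ (f : MvPolynomial (Fin 3) k) (i j l : Fin n),
        f ≠ 0 ∧ f.IsHomogeneous 1 ∧ i ≠ j ∧ i ≠ l ∧ j ≠ l ∧
        MvPolynomial.eval (P i) f = 0 ∧ MvPolynomial.eval (P j) f = 0 ∧
        MvPolynomial.eval (P l) f = 0) :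
    ∃ L : MvPolynomial (Fin 3) k, L ≠ 0 ∧ L.IsHomogeneous 1 ∧
      ∀ i, MvPolynomial.eval (P i) L ≠ 0 := by
  classical
  by_contra hno
  set q : ℤ := (Fintype.card k : ℤ) with hq
  have hq1 : 1 < q := by rw [hq]; exact_mod_cast Fintype.one_lt_card (α := k)
  set m : (Fin 3 → k) → ℤ := fun a => ∑ i, if P i ⬝ᵥ a = 0 then 1 else 0 with hm
  have hmcard : ∀ a, m a = (Finset.univ.filter fun i => P i ⬝ᵥ a = 0).card := by
    intro a
    simp [hm]
  have hone : ∀ i, ∑ a : Fin 3 → k, (if P i ⬝ᵥ a = 0 then (1 : ℤ) else 0) = q ^ 2 := by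
    intro i
    have h := card_orthogonal ![P i] (by simpa using hP i)
    simp only [Fin.forall_fin_one, Matrix.cons_val_zero] at h
    rw [Finset.sum_boole, h]
    simp [hq]
  have htwo : ∀ i j, i ≠ j →
      ∑ a : Fin 3 → k, (if P i ⬝ᵥ a = 0 ∧ P j ⬝ᵥ a = 0 then (1 : ℤ) else 0) = q := by
    intro i j hij
    have hind : LinearIndependent k ![P i, P j] :=
      (LinearIndependent.pair_iff' (hP i)).mpr fun c hc => hdist i j hij ⟨c, hc.symm⟩
    have h := card_orthogonal ![P i, P j] hind
    simp only [Fin.forall_fin_two, Matrix.cons_val_zero, Matrix.cons_val_one] at h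
    rw [Finset.sum_boole, h]
    simp [hq]
  have hsum1 : ∑ a, m a = n * q ^ 2 := by
    rw [hm, Finset.sum_comm]
    simp [hone]
  have hsum2 : ∑ a, m a ^ 2 = n * q ^ 2 + n * (n - 1) * q := by
    have hpair : ∀ i j, ∑ a : Fin 3 → k,
        (if P i ⬝ᵥ a = 0 then (1 : ℤ) else 0) * (if P j ⬝ᵥ a = 0 then 1 else 0)
          = q + if i = j then q ^ 2 - q else 0 := by
      intro i j
      simp_rw [ite_zero_mul_ite_zero, mul_one]
      by_cases hij : i = j
      · subst hij
        simpa using hone i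
      · simpa [hij] using htwo i j hij
    simp_rw [hm, sq (∑ _, _), Finset.sum_mul_sum]
    rw [Finset.sum_comm]
    simp_rw [Finset.sum_comm (s := (Finset.univ : Finset (Fin 3 → k))), hpair,
      Finset.sum_add_distrib]
    simp
    ring
  have hzero : m 0 = n := by simp [hm]
  have hline : ∀ a, a ≠ 0 → (m a - 1) * (m a - 2) = 0 := by
    intro a ha
    have hpos : 0 < (Finset.univ.filter fun i => P i ⬝ᵥ a = 0).card := by
      by_contra! h
      rw [Nat.le_zero, Finset.card_eq_zero, Finset.filter_eq_empty_iff] at h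
      exact hno ⟨linForm a, linForm_ne_zero ha, linForm_isHomogeneous a,
        fun i => by rw [eval_linForm]; exact h (Finset.mem_univ i)⟩
    have hle : (Finset.univ.filter fun i => P i ⬝ᵥ a = 0).card ≤ 2 := by
      by_contra! h
      obtain ⟨i, j, l, hi, hj, hl, hij, hil, hjl⟩ := Finset.two_lt_card_iff.mp h
      simp only [Finset.mem_filter, Finset.mem_univ, true_and] at hi hj hl
      exact hcol ⟨linForm a, i, j, l, linForm_ne_zero ha, linForm_isHomogeneous a, hij, hil, hjl,
        by rwa [eval_linForm], by rwa [eval_linForm], by rwa [eval_linForm]⟩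
    rw [hmcard]
    interval_cases (Finset.univ.filter fun i => P i ⬝ᵥ a = 0).card <;> norm_num
  have htotal : ∑ a, (m a - 1) * (m a - 2) = ((n : ℤ) - 1) * (n - 2) := by
    rw [Finset.sum_eq_single 0 (fun a _ ha => hline a ha) (by simp), hzero]
  have hexpand : ∑ a, (m a - 1) * (m a - 2) = ∑ a, m a ^ 2 - 3 * ∑ a, m a + 2 * q ^ 3 := by
    have hall : ∑ _a : Fin 3 → k, (2 : ℤ) = 2 * q ^ 3 := by
      simp [hq, mul_comm]
    rw [← hall, Finset.mul_sum, ← Finset.sum_sub_distrib, ← Finset.sum_add_distrib]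
    exact Finset.sum_congr rfl fun a _ => by ring
  rw [htotal, hsum1, hsum2] at hexpand
  have hfactor : (q - 1) * ((n - 1 - q) * (n - 1 - q - 1) + q * (q - 1)) = 0 := by
    linear_combination -hexpand
  have hd : 0 ≤ ((n : ℤ) - 1 - q) * (n - 1 - q - 1) := by
    rcases le_or_gt ((n : ℤ) - 1 - q) 0 with h | h
    · exact mul_nonneg_of_nonpos_of_nonpos h (by omega)
    · exact mul_nonneg h.le (by omega)
  have hqq : 0 < q * (q - 1) := mul_pos (by omega) (by omega)
  exact (mul_pos (by omega : 0 < q - 1) (by omega)).ne' hfactor
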